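/- Let f be a spectral point of graphs and α ≤ β real numbers. If the exponent α is admissible for f (i.e. f_α is monotone under cohomomorphisms of noncommutative graphs of the form ⊕_{d=1}^r Ḡ_d ⊗ Q_d), then β is also admissible for f (i.e. f_β is monotone). -/

import Mathlib

open scoped Kronecker
open Matrix

namespace NCG

/-- Existence of a cohomomorphism from `T` to `S` (written `T ≤ S`). -/
def Cohom {A B : Type} [Fintype A] [DecidableEq A] [Fintype B] [DecidableEq B]
    (T : Submodule ℂ (Matrix B B ℂ)) (S : Submodule ℂ (Matrix A A ℂ)) : Prop :=
  ∃ (k : ℕ) (E : Fin k → Matrix A B ℂ),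
    (∑ i, (E i)ᴴ * E i) = 1 ∧ ∀ i j : Fin k, ∀ M ∈ S, (E i)ᴴ * M * E j ∈ T

/-- The noncommutative graph `Ḡ` of a classical graph `G`. -/
noncomputable def graphNC {V : Type} [Fintype V] [DecidableEq V] (G : SimpleGraph V) :
    Submodule ℂ (Matrix V V ℂ) :=
  Submodule.span ℂ {M | ∃ x y : V, (G.Adj x y ∨ x = y) ∧ M = Matrix.single x y 1}

/-- The confusability graph `Q_d = ℂ·I_d` of the noiseless `d`-dimensional quantum channel. -/
noncomputable def qGraph (d : ℕ) : Submodule ℂ (Matrix (Fin d) (Fin d) ℂ) :=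
  Submodule.span ℂ {(1 : Matrix (Fin d) (Fin d) ℂ)}

/-- Tensor product of noncommutative graphs. -/
noncomputable def ncTensor {A B : Type} [Fintype A] [DecidableEq A] [Fintype B] [DecidableEq B]
    (S : Submodule ℂ (Matrix A A ℂ)) (T : Submodule ℂ (Matrix B B ℂ)) :
    Submodule ℂ (Matrix (A × B) (A × B) ℂ) :=
  Submodule.span ℂ {M | ∃ X ∈ S, ∃ Y ∈ T, M = X ⊗ₖ Y}

/-- Direct sum of a finite family of noncommutative graphs. -/
noncomputable def ncDirectSum {ι : Type} [Fintype ι] [DecidableEq ι] {V : ι → Type}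
    [∀ i, Fintype (V i)] [∀ i, DecidableEq (V i)]
    (S : ∀ i, Submodule ℂ (Matrix (V i) (V i) ℂ)) :
    Submodule ℂ (Matrix (Σ i, V i) (Σ i, V i) ℂ) where
  carrier := {M | (∀ p q : Σ i, V i, p.1 ≠ q.1 → M p q = 0) ∧
    ∀ i, (Matrix.of fun x y : V i => M ⟨i, x⟩ ⟨i, y⟩) ∈ S i}
  add_mem' := by
    rintro a b ⟨ha1, ha2⟩ ⟨hb1, hb2⟩
    refine ⟨fun p q h => ?_, fun i => ?_⟩
    · simp [Matrix.add_apply, ha1 p q h, hb1 p q h]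
    · have h := (S i).add_mem (ha2 i) (hb2 i)
      convert h using 1
      rfl
  zero_mem' := by
    refine ⟨fun p q h => rfl, fun i => ?_⟩
    have h0 : (Matrix.of fun x y : V i =>
        (0 : Matrix (Σ j, V j) (Σ j, V j) ℂ) ⟨i, x⟩ ⟨i, y⟩) = 0 := rfl
    rw [h0]
    exact (S i).zero_mem
  smul_mem' := by
    rintro c a ⟨ha1, ha2⟩
    refine ⟨fun p q h => ?_, fun i => ?_⟩
    · simp [Matrix.smul_apply, ha1 p q h]
    · have h := (S i).smul_mem c (ha2 i)
      convert h using 1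
      rfl

/-- `⊕_{d=1}^r Ḡ_d ⊗ Q_d`, where `G d` plays the role of `G_{d+1}` for `d : Fin r`. -/
noncomputable def bigSum {r : ℕ} {V : Fin r → Type} [∀ d, Fintype (V d)] [∀ d, DecidableEq (V d)]
    (G : ∀ d, SimpleGraph (V d)) :
    Submodule ℂ (Matrix (Σ d : Fin r, V d × Fin (d.1 + 1))
      (Σ d : Fin r, V d × Fin (d.1 + 1)) ℂ) :=
  ncDirectSum fun d : Fin r => ncTensor (graphNC (G d)) (qGraph (d.1 + 1))


/-- Disjoint union of simple graphs. -/
def disjUnion {V W : Type} (G : SimpleGraph V) (H : SimpleGraph W) :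
    SimpleGraph (V ⊕ W) where
  Adj a b := match a, b with
    | Sum.inl x, Sum.inl y => G.Adj x y
    | Sum.inr x, Sum.inr y => H.Adj x y
    | _, _ => False
  symm := by
    constructor
    rintro (x | x) (y | y) h
    · exact G.symm.symm _ _ h
    · exact h.elim
    · exact h.elim
    · exact H.symm.symm _ _ h
  loopless := by
    constructor
    rintro (x | x) h
    · exact G.loopless.irrefl x h
    · exact H.loopless.irrefl x h

/-- Strong product of simple graphs. -/
def strongProd {V W : Type} (G : SimpleGraph V) (H : SimpleGraph W) :
    SimpleGraph (V × W) where
  Adj p q := p ≠ q ∧ (G.Adj p.1 q.1 ∨ p.1 = q.1) ∧ (H.Adj p.2 q.2 ∨ p.2 = q.2)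
  symm := by
    constructor
    rintro p q ⟨hne, h1, h2⟩
    exact ⟨hne.symm, h1.imp (fun h => h.symm) (fun h => h.symm),
      h2.imp (fun h => h.symm) (fun h => h.symm)⟩
  loopless := ⟨fun p h => h.1 rfl⟩

/-- A spectral point of graphs: a normalized, additive, multiplicative,
isomorphism-invariant graph parameter, monotone under cohomomorphisms
(homomorphisms between the complements). -/
structure GraphSpectralPoint where
  val : ∀ (V : Type) [Fintype V] [DecidableEq V], SimpleGraph V → ℝ
  nonneg : ∀ (V : Type) [Fintype V] [DecidableEq V] (G : SimpleGraph V), 0 ≤ val V G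
  iso_inv : ∀ (V W : Type) [Fintype V] [DecidableEq V] [Fintype W] [DecidableEq W]
    (G : SimpleGraph V) (H : SimpleGraph W), Nonempty (G ≃g H) → val V G = val W H
  additive : ∀ (V W : Type) [Fintype V] [DecidableEq V] [Fintype W] [DecidableEq W]
    (G : SimpleGraph V) (H : SimpleGraph W),
    val (V ⊕ W) (disjUnion G H) = val V G + val W H
  multiplicative : ∀ (V W : Type) [Fintype V] [DecidableEq V] [Fintype W] [DecidableEq W]
    (G : SimpleGraph V) (H : SimpleGraph W),
    val (V × W) (strongProd G H) = val V G * val W H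
  normalized : val (Fin 1) ⊤ = 1
  monotone : ∀ (V W : Type) [Fintype V] [DecidableEq V] [Fintype W] [DecidableEq W]
    (G : SimpleGraph V) (H : SimpleGraph W), Nonempty (Hᶜ →g Gᶜ) → val W H ≤ val V G

/-- The extension `F_α` of a graph parameter `F` with exponent `α` is monotone under
cohomomorphisms of noncommutative graphs of the form `⊕_{d=1}^r Ḡ_d ⊗ Q_d`
(the exponent `α` is admissible for `F`). -/
def MonotoneExt (F : ∀ (V : Type) [Fintype V] [DecidableEq V], SimpleGraph V → ℝ)
    (α : ℝ) : Prop :=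
  ∀ (r s : ℕ) (V : Fin r → Type) (W : Fin s → Type)
    [∀ d, Fintype (V d)] [∀ d, DecidableEq (V d)]
    [∀ d, Fintype (W d)] [∀ d, DecidableEq (W d)]
    (G : ∀ d, SimpleGraph (V d)) (H : ∀ d, SimpleGraph (W d)),
    Cohom (bigSum H) (bigSum G) →
    ∑ d : Fin s, F (W d) (H d) * ((d.1 + 1 : ℕ) : ℝ) ^ α ≤
      ∑ d : Fin r, F (V d) (G d) * ((d.1 + 1 : ℕ) : ℝ) ^ α

/-- A matrix lies in the noncommutative graph of `G` iff it is supported on edges and the diagonal. -/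
theorem mem_graphNC {V : Type} [Fintype V] [DecidableEq V] (G : SimpleGraph V)
    (N : Matrix V V ℂ) :
    N ∈ graphNC G ↔ ∀ x y, ¬ (G.Adj x y ∨ x = y) → N x y = 0 := by
  constructor
  · intro hN x y hxy
    unfold graphNC at hN
    induction hN using Submodule.span_induction with
    | mem M hM =>
      obtain ⟨a, b, hab, rfl⟩ := hM
      rw [Matrix.single_apply, if_neg]
      rintro ⟨rfl, rfl⟩
      exact hxy hab
    | zero => rfl
    | add A B _ _ hA hB => simp [hA, hB]
    | smul c A _ hA => simp [hA]
  · intro h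
    rw [Matrix.matrix_eq_sum_single N]
    refine Submodule.sum_mem _ fun x _ => Submodule.sum_mem _ fun y _ => ?_
    by_cases hxy : G.Adj x y ∨ x = y
    · have : Matrix.single x y (N x y) = N x y • Matrix.single x y (1 : ℂ) := by
        simp [Matrix.smul_single]
      rw [this]
      exact Submodule.smul_mem _ _ (Submodule.subset_span ⟨x, y, hxy, rfl⟩)
    · rw [h x y hxy, Matrix.single_zero]
      exact Submodule.zero_mem _

theorem mem_ncTensor_qGraph {V : Type} [Fintype V] [DecidableEq V]
    (S : Submodule ℂ (Matrix V V ℂ)) (d : ℕ) (M : Matrix (V × Fin d) (V × Fin d) ℂ) :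
    M ∈ ncTensor S (qGraph d) ↔ ∃ N ∈ S, M = N ⊗ₖ (1 : Matrix (Fin d) (Fin d) ℂ) := by
  constructor
  · intro hM
    unfold ncTensor at hM
    induction hM using Submodule.span_induction with
    | mem M hM =>
      obtain ⟨X, hX, Y, hY, rfl⟩ := hM
      obtain ⟨c, rfl⟩ := Submodule.mem_span_singleton.1 hY
      exact ⟨c • X, S.smul_mem c hX, by rw [Matrix.kronecker_smul, Matrix.smul_kronecker]⟩
    | zero => exact ⟨0, S.zero_mem, by rw [Matrix.zero_kronecker]⟩
    | add A B _ _ hA hB =>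
      obtain ⟨N, hN, rfl⟩ := hA
      obtain ⟨N', hN', rfl⟩ := hB
      exact ⟨N + N', S.add_mem hN hN', by rw [Matrix.add_kronecker]⟩
    | smul c A _ hA =>
      obtain ⟨N, hN, rfl⟩ := hA
      exact ⟨c • N, S.smul_mem c hN, by rw [Matrix.smul_kronecker]⟩
  · rintro ⟨N, hN, rfl⟩
    exact Submodule.subset_span ⟨N, hN, 1, Submodule.mem_span_singleton_self _, rfl⟩

/-- Entrywise description of `⊕ Ḡ_d ⊗ Q_d`. -/
theorem mem_bigSum {r : ℕ} {V : Fin r → Type} [∀ d, Fintype (V d)] [∀ d, DecidableEq (V d)]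
    (G : ∀ d, SimpleGraph (V d))
    (M : Matrix (Σ d : Fin r, V d × Fin (d.1 + 1)) (Σ d : Fin r, V d × Fin (d.1 + 1)) ℂ) :
    M ∈ bigSum G ↔ (∀ p q, p.1 ≠ q.1 → M p q = 0) ∧
      ∀ d, ∃ N : Matrix (V d) (V d) ℂ,
        (∀ x y, ¬ ((G d).Adj x y ∨ x = y) → N x y = 0) ∧
        ∀ x y k l, M ⟨d, x, k⟩ ⟨d, y, l⟩ = if k = l then N x y else 0 := by
  refine and_congr Iff.rfl (forall_congr' fun d => ?_)
  rw [mem_ncTensor_qGraph]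
  refine exists_congr fun N => and_congr (mem_graphNC _ _) ?_
  constructor
  · intro h x y k l
    have := congrFun (congrFun h (x, k)) (y, l)
    simpa [Matrix.kroneckerMap_apply, Matrix.one_apply] using this
  · intro h
    ext ⟨x, k⟩ ⟨y, l⟩
    simpa [Matrix.kroneckerMap_apply, Matrix.one_apply] using h x y k l

open scoped ComplexOrder in
theorem eq_zero_of_conjTranspose_mul_self_eq_smul_one {m n : ℕ} (hmn : m < n)
    (F : Matrix (Fin m) (Fin n) ℂ) (c : ℂ) (h : Fᴴ * F = c • 1) : F = 0 := by
  rw [← Matrix.conjTranspose_mul_self_eq_zero, h]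
  by_cases hc : c = 0
  · simp [hc]
  have h1 : (c • (1 : Matrix (Fin n) (Fin n) ℂ)).rank = n := by
    rw [Matrix.rank_of_isUnit, Fintype.card_fin]
    exact (isUnit_one.smul (Units.mk0 c hc))
  have h2 : (Fᴴ * F).rank ≤ m :=
    (Matrix.rank_mul_le_right _ _).trans ((Matrix.rank_le_card_height F).trans (by simp))
  rw [h, h1] at h2
  omega

/-- A cohomomorphism into `⊕ Ḡ_d ⊗ Q_d` cannot send a quantum block into a smaller one. -/
theorem cohom_entry_eq_zero {r s : ℕ} {V : Fin r → Type} {W : Fin s → Type}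
    [∀ d, Fintype (V d)] [∀ d, DecidableEq (V d)]
    [∀ d, Fintype (W d)] [∀ d, DecidableEq (W d)]
    (G : ∀ d, SimpleGraph (V d)) (H : ∀ d, SimpleGraph (W d))
    (E : Matrix (Σ d : Fin r, V d × Fin (d.1 + 1)) (Σ d : Fin s, W d × Fin (d.1 + 1)) ℂ)
    (hE : ∀ M ∈ bigSum G, Eᴴ * M * E ∈ bigSum H)
    {d : Fin r} {e : Fin s} (hde : d.1 < e.1) (x : V d) (k : Fin (d.1 + 1))
    (y : W e) (l : Fin (e.1 + 1)) : E ⟨d, x, k⟩ ⟨e, y, l⟩ = 0 := by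
  let v : (Σ d : Fin r, V d × Fin (d.1 + 1)) → ℂ := fun p =>
    if ∃ k, p = ⟨d, x, k⟩ then 1 else 0
  have hP : Matrix.diagonal v ∈ bigSum G := by
    rw [mem_bigSum]
    refine ⟨fun p q hpq => Matrix.diagonal_apply_ne _ fun h => hpq (by rw [h]), fun d' => ?_⟩
    refine ⟨Matrix.diagonal fun x' => v ⟨d', x', 0⟩,
      fun x' y' h => Matrix.diagonal_apply_ne _ fun h' => h (Or.inr h'), fun x' y' i j => ?_⟩
    have hv : ∀ i, v ⟨d', x', i⟩ = v ⟨d', x', 0⟩ := by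
      intro i
      refine if_congr ?_ rfl rfl
      constructor
      · rintro ⟨k, hk⟩
        obtain ⟨rfl, hk⟩ := Sigma.mk.inj_iff.1 hk
        obtain ⟨rfl, -⟩ := Prod.mk_inj.1 (eq_of_heq hk)
        exact ⟨0, rfl⟩
      · rintro ⟨k, hk⟩
        obtain ⟨rfl, hk⟩ := Sigma.mk.inj_iff.1 hk
        obtain ⟨rfl, -⟩ := Prod.mk_inj.1 (eq_of_heq hk)
        exact ⟨i, rfl⟩
    by_cases hx : x' = y'
    · subst hx
      by_cases hij : i = j
      · subst hij
        simp [hv i]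
      · simp [hij]
    · simp [hx]
  obtain ⟨N, -, hN⟩ := ((mem_bigSum H _).1 (hE _ hP)).2 e
  let F : Matrix (Fin (d.1 + 1)) (Fin (e.1 + 1)) ℂ := Matrix.of fun k l => E ⟨d, x, k⟩ ⟨e, y, l⟩
  have hF : Fᴴ * F = N y y • 1 := by
    ext l l'
    rw [Matrix.smul_apply, Matrix.one_apply, smul_eq_mul, mul_ite, mul_one, mul_zero, ← hN y y l l',
      Matrix.mul_apply, Matrix.mul_apply]
    refine Finset.sum_of_injOn (fun k => ⟨d, x, k⟩) ?_ (fun _ _ => by simp) ?_ ?_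
    · intro a _ b _ hab
      simpa using hab
    · intro p _ hp
      have : v p = 0 := if_neg fun ⟨k, hk⟩ => hp ⟨k, by simp, hk.symm⟩
      simp [this]
    · intro k _
      have : v ⟨d, x, k⟩ = 1 := if_pos ⟨k, rfl⟩
      simp [this, F]
  have := congrFun (congrFun
    (eq_zero_of_conjTranspose_mul_self_eq_smul_one (by omega) F _ hF) k) l
  simpa [F] using this

/-- The vertices of the family `V` in the blocks of index at least `D`. -/
abbrev TailVertex {r : ℕ} (V : Fin r → Type) (D : ℕ) (d : Fin r) : Type :=
  {_x : V d // D ≤ d.1}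

/-- The family obtained from `G` by emptying the graphs of index below `D`. -/
abbrev tailGraph {r : ℕ} {V : Fin r → Type} (G : ∀ d, SimpleGraph (V d)) (D : ℕ) (d : Fin r) :
    SimpleGraph (TailVertex V D d) :=
  (G d).comap Subtype.val

/-- The inclusion of the basis labels of the blocks of index at least `D`. -/
def tailIncl {r : ℕ} (V : Fin r → Type) (D : ℕ)
    (p : Σ d : Fin r, TailVertex V D d × Fin (d.1 + 1)) : Σ d : Fin r, V d × Fin (d.1 + 1) :=
  ⟨p.1, p.2.1.1, p.2.2⟩

theorem tailIncl_injective {r : ℕ} (V : Fin r → Type) (D : ℕ) :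
    Function.Injective (tailIncl V D) := by
  rintro ⟨d, ⟨x, hx⟩, k⟩ ⟨d', ⟨x', hx'⟩, k'⟩ h
  obtain ⟨rfl, h⟩ := Sigma.mk.inj_iff.1 h
  obtain ⟨h1, h2⟩ := Prod.mk_inj.1 (eq_of_heq h)
  dsimp only at h1 h2
  subst h1 h2
  rfl

/-- Restriction of a cohomomorphism to the blocks of index at least `D`. -/
theorem Cohom.tail {r s : ℕ} {V : Fin r → Type} {W : Fin s → Type}
    [∀ d, Fintype (V d)] [∀ d, DecidableEq (V d)]
    [∀ d, Fintype (W d)] [∀ d, DecidableEq (W d)]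
    {G : ∀ d, SimpleGraph (V d)} {H : ∀ d, SimpleGraph (W d)}
    (h : Cohom (bigSum H) (bigSum G)) (D : ℕ) :
    Cohom (bigSum (tailGraph H D)) (bigSum (tailGraph G D)) := by
  obtain ⟨n, E, hE1, hE2⟩ := h
  have hzero : ∀ i p q, p ∉ Set.range (tailIncl V D) → E i p (tailIncl W D q) = 0 := by
    rintro i ⟨d, x, k⟩ ⟨e, ⟨y, hy⟩, l⟩ hp
    refine cohom_entry_eq_zero G H (E i) (hE2 i i) ?_ x k y l
    by_contra hde
    exact hp ⟨⟨d, ⟨x, by omega⟩, k⟩, rfl⟩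
  have hsum : ∀ g : (Σ d : Fin r, V d × Fin (d.1 + 1)) → ℂ,
      (∀ p, p ∉ Set.range (tailIncl V D) → g p = 0) →
      ∑ p, g (tailIncl V D p) = ∑ p, g p := by
    intro g hg
    refine Finset.sum_of_injOn (tailIncl V D) (tailIncl_injective V D).injOn
      (fun _ _ => by simp) (fun p _ hp => hg p (by simpa using hp)) fun _ _ => rfl
  refine ⟨n, fun i => (E i).submatrix (tailIncl V D) (tailIncl W D), ?_, fun i j M hM => ?_⟩
  · ext q q'
    have h1 := congrFun (congrFun hE1 (tailIncl W D q)) (tailIncl W D q')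
    rw [Matrix.sum_apply] at h1 ⊢
    have h2 : (1 : Matrix _ _ ℂ) q q' =
        (1 : Matrix _ _ ℂ) (tailIncl W D q) (tailIncl W D q') := by
      simp only [Matrix.one_apply, (tailIncl_injective W D).eq_iff]
    rw [h2, ← h1]
    refine Finset.sum_congr rfl fun i _ => ?_
    rw [Matrix.mul_apply, Matrix.mul_apply, ← hsum]
    · rfl
    · intro p hp
      rw [hzero i p q' hp, mul_zero]
  · rw [mem_bigSum] at hM
    obtain ⟨hM1, hM2⟩ := hM
    choose N hN1 hN2 using hM2
    let M' : Matrix (Σ d : Fin r, V d × Fin (d.1 + 1)) (Σ d : Fin r, V d × Fin (d.1 + 1)) ℂ :=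
      Matrix.of fun p q => if h : D ≤ p.1.1 ∧ D ≤ q.1.1 then
        M ⟨p.1, ⟨p.2.1, h.1⟩, p.2.2⟩ ⟨q.1, ⟨q.2.1, h.2⟩, q.2.2⟩ else 0
    have hM' : M' ∈ bigSum G := by
      rw [mem_bigSum]
      refine ⟨fun p q hpq => ?_, fun d => ?_⟩
      · by_cases h : D ≤ p.1.1 ∧ D ≤ q.1.1
        · simpa [M', h] using hM1 _ _ hpq
        · simp only [M', Matrix.of_apply, dif_neg h]
      · refine ⟨Matrix.of fun x y => if h : D ≤ d.1 then N d ⟨x, h⟩ ⟨y, h⟩ else 0,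
          fun x y hxy => ?_, fun x y k l => ?_⟩
        · by_cases h : D ≤ d.1
          · simp only [Matrix.of_apply, dif_pos h]
            exact hN1 d _ _ (by simpa using hxy)
          · simp [h]
        · by_cases h : D ≤ d.1
          · simp [M', h, hN2]
          · simp [M', h]
    have key : ((E i).submatrix (tailIncl V D) (tailIncl W D))ᴴ * M *
        (E j).submatrix (tailIncl V D) (tailIncl W D) =
        ((E i)ᴴ * M' * E j).submatrix (tailIncl W D) (tailIncl W D) := by
      ext q q'
      rw [Matrix.submatrix_apply, Matrix.mul_apply, Matrix.mul_apply, ← hsum]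
      · refine Finset.sum_congr rfl fun p _ => ?_
        rw [Matrix.mul_apply, Matrix.mul_apply, ← hsum]
        · congr 1
          refine Finset.sum_congr rfl fun p' _ => ?_
          have : M' (tailIncl V D p') (tailIncl V D p) = M p' p :=
            dif_pos ⟨p'.2.1.2, p.2.1.2⟩
          rw [this]
          rfl
        · intro p' hp'
          rw [Matrix.conjTranspose_apply, hzero i p' q hp', star_zero, zero_mul]
      · intro p hp
        rw [hzero j p q' hp, mul_zero]
    rw [key]
    obtain ⟨hT1, hT2⟩ := (mem_bigSum H _).1 (hE2 i j M' hM')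
    rw [mem_bigSum]
    refine ⟨fun p q hpq => hT1 _ _ hpq, fun d => ?_⟩
    obtain ⟨N', hN1', hN2'⟩ := hT2 d
    refine ⟨N'.submatrix Subtype.val Subtype.val, fun x y hxy => hN1' _ _ ?_,
      fun x y k l => hN2' _ _ _ _⟩
    rwa [Subtype.ext_iff] at hxy

theorem GraphSpectralPoint.val_of_isEmpty (f : GraphSpectralPoint) (V : Type) [Fintype V]
    [DecidableEq V] [IsEmpty V] (G : SimpleGraph V) : f.val V G = 0 := by
  have h := f.additive V V G G
  rw [f.iso_inv (V ⊕ V) V (disjUnion G G) G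
    ⟨⟨Equiv.equivOfIsEmpty _ _, fun {a} => isEmptyElim a⟩⟩] at h
  linarith

theorem GraphSpectralPoint.val_tailGraph (f : GraphSpectralPoint) {r : ℕ} {V : Fin r → Type}
    [∀ d, Fintype (V d)] [∀ d, DecidableEq (V d)] (G : ∀ d, SimpleGraph (V d)) (D : ℕ)
    (d : Fin r) :
    f.val (TailVertex V D d) (tailGraph G D d) = if D ≤ d.1 then f.val (V d) (G d) else 0 := by
  split_ifs with h
  · exact f.iso_inv _ _ _ _ ⟨⟨Equiv.subtypeUnivEquiv fun _ => h, Iff.rfl⟩⟩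
  · have : IsEmpty (TailVertex V D d) := ⟨fun x => h x.2⟩
    exact f.val_of_isEmpty _ _

theorem sum_mul_eq_sum_tails {r n : ℕ} (hr : r ≤ n) (u : Fin r → ℝ) (w : ℕ → ℝ) :
    ∑ d, u d * w d.1 = w 0 * (∑ d : Fin r, if 0 ≤ d.1 then u d else 0) +
      ∑ k ∈ Finset.range n, (w (k + 1) - w k) * ∑ d : Fin r, if k + 1 ≤ d.1 then u d else 0 := by
  simp_rw [Finset.mul_sum]
  rw [Finset.sum_comm, ← Finset.sum_add_distrib]
  refine Finset.sum_congr rfl fun d _ => ?_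
  have h : ∑ k ∈ Finset.range n, (w (k + 1) - w k) * (if k + 1 ≤ d.1 then u d else 0) =
      ∑ k ∈ Finset.range d.1, (w (k + 1) - w k) * u d := by
    symm
    refine Finset.sum_subset_zero_on_sdiff (Finset.range_subset_range.2 (by omega)) ?_ ?_
    · intro k hk
      have : ¬ k + 1 ≤ d.1 := by simp at hk; omega
      simp [this]
    · intro k hk
      have : k + 1 ≤ d.1 := by simp at hk; omega
      simp [this]
  rw [h, ← Finset.sum_mul, Finset.sum_range_sub]
  simp only [Nat.zero_le, if_true]
  ring

/-- Domination of all tail sums gives domination of sums with nondecreasing weights. -/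
theorem sum_mul_le_sum_mul_of_tails_le {r s : ℕ} (u : Fin s → ℝ) (v : Fin r → ℝ) (w : ℕ → ℝ)
    (hw0 : 0 ≤ w 0) (hw : Monotone w)
    (h : ∀ D : ℕ, (∑ d : Fin s, if D ≤ d.1 then u d else 0) ≤
      ∑ d : Fin r, if D ≤ d.1 then v d else 0) :
    ∑ d, u d * w d.1 ≤ ∑ d, v d * w d.1 := by
  rw [sum_mul_eq_sum_tails (Nat.le_add_left s r) u w,
    sum_mul_eq_sum_tails (Nat.le_add_right r s) v w]
  refine add_le_add (mul_le_mul_of_nonneg_left (h 0) hw0) (Finset.sum_le_sum fun k _ => ?_)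
  exact mul_le_mul_of_nonneg_left (h (k + 1)) (sub_nonneg.2 (hw k.le_succ))

theorem admissible_exponents_upwards_closed (f : GraphSpectralPoint) {α β : ℝ}
    (hαβ : α ≤ β) (hadm : MonotoneExt f.val α) : MonotoneExt f.val β := by
  intro r s V W _ _ _ _ G H hGH
  have hsplit : ∀ (a : ℝ) (n : ℕ), a * ((n + 1 : ℕ) : ℝ) ^ β =
      a * ((n + 1 : ℕ) : ℝ) ^ α * ((n + 1 : ℕ) : ℝ) ^ (β - α) := by
    intro a n
    rw [mul_assoc, ← Real.rpow_add (by positivity), add_sub_cancel]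
  simp_rw [hsplit]
  refine sum_mul_le_sum_mul_of_tails_le _ _ (fun n => ((n + 1 : ℕ) : ℝ) ^ (β - α))
    (by positivity) ?_ fun D => ?_
  · intro m n hmn
    exact Real.rpow_le_rpow (by positivity) (by exact_mod_cast Nat.succ_le_succ hmn)
      (sub_nonneg.2 hαβ)
  · have := hadm r s _ _ (tailGraph G D) (tailGraph H D) (hGH.tail D)
    simpa only [f.val_tailGraph, ite_mul, zero_mul] using this

end NCG
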